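/- If p_v is the multivariate standard normal distribution N(0, I_D), then under the assumptions below, Var_{p_d, p_v}[∇_θ f(θ*; x, v_1^M)] = Σ_{i,j} V_{ij} + (2/M) Σ_i V_{ii} + (2/M) Σ_{i≠j} W_{ij}. (Lemma B.6 of the paper, Gaussian case.) -/

import Mathlib

open MeasureTheory

noncomputable section

/-- `∂ᵢ log p_m(x;θ)`, the `i`-th partial derivative in `x` of the log-density. -/
def dLx {D K : ℕ} (pm : EuclideanSpace ℝ (Fin K) → (Fin D → ℝ) → ℝ)
    (θ : EuclideanSpace ℝ (Fin K)) (x : Fin D → ℝ) (i : Fin D) : ℝ :=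
  fderiv ℝ (fun y => Real.log (pm θ y)) x (Pi.single i 1)

/-- `∂ᵢ∂ⱼ log p_m(x;θ)`, a second partial derivative in `x` of the log-density. -/
def d2Lx {D K : ℕ} (pm : EuclideanSpace ℝ (Fin K) → (Fin D → ℝ) → ℝ)
    (θ : EuclideanSpace ℝ (Fin K)) (x : Fin D → ℝ) (i j : Fin D) : ℝ :=
  fderiv ℝ (fun y => dLx pm θ y j) x (Pi.single i 1)

/-- `u_{ij}(x) = ∇_θ ∂ᵢ∂ⱼ l_m + ½ ∇_θ(∂ᵢ l_m ∂ⱼ l_m)` evaluated at `θ = θ*`. -/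
def uVec {D K : ℕ} (pm : EuclideanSpace ℝ (Fin K) → (Fin D → ℝ) → ℝ)
    (θstar : EuclideanSpace ℝ (Fin K)) (i j : Fin D) (x : Fin D → ℝ) :
    EuclideanSpace ℝ (Fin K) :=
  gradient (fun θ => d2Lx pm θ x i j) θstar
    + (1/2 : ℝ) • gradient (fun θ => dLx pm θ x i * dLx pm θ x j) θstar

/-- `f(θ; x, v_1^M) = (1/M) Σⱼ [vⱼᵀ ∇ₓ s_m(x;θ) vⱼ + ½ (vⱼᵀ s_m(x;θ))²]`. -/
def avgF {D K M : ℕ} (pm : EuclideanSpace ℝ (Fin K) → (Fin D → ℝ) → ℝ)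
    (θ : EuclideanSpace ℝ (Fin K)) (x : Fin D → ℝ) (vs : Fin M → Fin D → ℝ) : ℝ :=
  (1 / (M : ℝ)) * ∑ k : Fin M,
    ((∑ i, ∑ j, vs k i * vs k j * d2Lx pm θ x i j)
      + (1/2) * (∑ i, vs k i * dLx pm θ x i) ^ 2)

/-- `∇_θ f(θ*; x, v_1^M)`. -/
def gradF {D K M : ℕ} (pm : EuclideanSpace ℝ (Fin K) → (Fin D → ℝ) → ℝ)
    (θstar : EuclideanSpace ℝ (Fin K)) (x : Fin D → ℝ) (vs : Fin M → Fin D → ℝ) :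
    EuclideanSpace ℝ (Fin K) :=
  gradient (fun θ => avgF pm θ x vs) θstar

/-!
Differentiating under the finite sums, the `a`-th coordinate of `∇_θ f(θ*; x, v_1^M)` is the average
over `k` of the quadratic forms `v_kᵀ U_a(x) v_k`, where `U_a(x) = (u_{ij}(x)_a)_{ij}` is symmetric
because mixed partial derivatives commute. As the gradient has mean zero, its covariance is the
second moment of these averages.

The `M` slices form a single standard Gaussian vector `w` of dimension `M D`, and the sum of the
quadratic forms of `U_a` is the one of the block-diagonal matrix `1 ⊗ U_a`. Integration by parts
against the Gaussian density (Stein's identity) yields the recursion `E[w_a w^e] = e_a E[w^(e - a)]`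
for monomials, hence Isserlis' formula for fourth moments, hence
`E[(wᵀ A w) (wᵀ B w)] = tr A tr B + tr (A Bᵀ) + tr (A B)`. For `A = 1 ⊗ U_a` and `B = 1 ⊗ U_b` the
first term carries a factor `M²` and the two others, equal by symmetry, a factor `M`; dividing by
`M²` gives the claim.
-/

section Monomial

variable {ι R : Type*} [Fintype ι] [CommMonoid R]

/-- The value at `w` of the monomial with exponent vector `e`, that is `w ^ e` in multi-index
notation. -/
def evalMonomial (e : ι → ℕ) (w : ι → R) : R :=
  ∏ i, w i ^ e i

lemma evalMonomial_single [DecidableEq ι] (a : ι) (w : ι → R) :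
    evalMonomial (Pi.single a 1) w = w a := by
  simp [evalMonomial, Pi.single_apply, pow_ite]

lemma evalMonomial_add (e e' : ι → ℕ) (w : ι → R) :
    evalMonomial (e + e') w = evalMonomial e w * evalMonomial e' w := by
  simp only [evalMonomial, Pi.add_apply, pow_add, Finset.prod_mul_distrib]

end Monomial

section GaussianMoments

open ProbabilityTheory
open scoped NNReal

lemma integrable_gaussianReal_iff {m : ℝ} {v : ℝ≥0} (hv : v ≠ 0) {f : ℝ → ℝ} :
    Integrable f (gaussianReal m v) ↔ Integrable (fun x => f x * gaussianPDFReal m v x) := by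
  rw [gaussianReal_of_var_ne_zero m hv, integrable_withDensity_iff_integrable_smul'
    (measurable_gaussianPDF m v) (ae_of_all _ fun _ => gaussianPDF_lt_top)]
  simp only [toReal_gaussianPDF, smul_eq_mul, mul_comm]

lemma hasDerivAt_gaussianPDFReal (m : ℝ) {v : ℝ≥0} (hv : v ≠ 0) (x : ℝ) :
    HasDerivAt (gaussianPDFReal m v) (-((x - m) / v * gaussianPDFReal m v x)) x := by
  have hexponent : HasDerivAt (fun y : ℝ => -(y - m) ^ 2 / (2 * v)) (-((x - m) / v)) x := by
    refine ((((hasDerivAt_id x).sub_const m).pow 2).neg.div_const (2 * v : ℝ)).congr_deriv ?_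
    have : (v : ℝ) ≠ 0 := mod_cast hv
    simp only [id_eq]
    field
  rw [gaussianPDFReal_def]
  exact (hexponent.exp.const_mul _).congr_deriv (by ring)

theorem integral_sub_mul_gaussianReal {m : ℝ} {v : ℝ≥0} {f f' : ℝ → ℝ}
    (hf : ∀ x, HasDerivAt f (f' x) x) (hf_int : Integrable f (gaussianReal m v))
    (hf'_int : Integrable f' (gaussianReal m v))
    (hxf_int : Integrable (fun x => (x - m) * f x) (gaussianReal m v)) :
    ∫ x, (x - m) * f x ∂gaussianReal m v = v * ∫ x, f' x ∂gaussianReal m v := by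
  rcases eq_or_ne v 0 with rfl | hv
  · simp
  have hv' : (v : ℝ) ≠ 0 := mod_cast hv
  rw [integrable_gaussianReal_iff hv] at hf_int hf'_int hxf_int
  have hparts := integral_mul_deriv_eq_deriv_mul_of_integrable (fun x _ => hf x)
    (fun x _ => hasDerivAt_gaussianPDFReal m hv x)
    ((hxf_int.const_mul (-(v : ℝ)⁻¹)).congr
      (ae_of_all _ fun x => by simp only [Pi.mul_apply]; ring))
    hf'_int hf_int
  calc ∫ x, (x - m) * f x ∂gaussianReal m v
      = -v * ∫ x, f x * -((x - m) / v * gaussianPDFReal m v x) := by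
        rw [integral_gaussianReal_eq_integral_smul hv, ← integral_const_mul]
        refine integral_congr_ae (ae_of_all _ fun x => ?_)
        simp only [smul_eq_mul]
        field
    _ = v * ∫ x, f' x ∂gaussianReal m v := by
        rw [hparts, integral_gaussianReal_eq_integral_smul hv]
        simp only [smul_eq_mul, mul_comm, neg_mul_neg]

lemma integrable_pow_gaussianReal (m : ℝ) (v : ℝ≥0) (n : ℕ) :
    Integrable (fun x : ℝ => x ^ n) (gaussianReal m v) :=
  integrable_pow_of_mem_interior_integrableExpSet (X := id) (by simp) n

lemma integral_pow_succ_gaussianReal (v : ℝ≥0) (n : ℕ) :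
    ∫ x, x ^ (n + 1) ∂gaussianReal 0 v = v * (n * ∫ x, x ^ (n - 1) ∂gaussianReal 0 v) := by
  have hstein := integral_sub_mul_gaussianReal (m := 0) (v := v) (hasDerivAt_pow n)
    (integrable_pow_gaussianReal 0 v n) ((integrable_pow_gaussianReal 0 v (n - 1)).const_mul n)
    (by simpa only [sub_zero, ← pow_succ'] using integrable_pow_gaussianReal 0 v (n + 1))
  simpa only [sub_zero, ← pow_succ', integral_const_mul] using hstein

variable {ι : Type*} [Fintype ι]

/-- The standard normal distribution `N(0, I)` on `ι → ℝ`, as a product of one-dimensional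
standard Gaussians. -/
abbrev stdGaussianPi (ι : Type*) [Fintype ι] : Measure (ι → ℝ) :=
  Measure.pi fun _ => gaussianReal 0 1

lemma integrable_evalMonomial_stdGaussianPi (e : ι → ℕ) :
    Integrable (fun w => evalMonomial e w) (stdGaussianPi ι) :=
  Integrable.fintype_prod fun i => integrable_pow_gaussianReal 0 1 (e i)

lemma integral_evalMonomial_stdGaussianPi (e : ι → ℕ) :
    ∫ w, evalMonomial e w ∂stdGaussianPi ι = ∏ i, ∫ x, x ^ e i ∂gaussianReal 0 1 :=
  integral_fintype_prod_eq_prod fun i (x : ℝ) => x ^ e i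

lemma integrable_mul_mul_mul_stdGaussianPi (a b c d : ι) :
    Integrable (fun w => w a * w b * (w c * w d)) (stdGaussianPi ι) := by
  classical
  refine (integrable_evalMonomial_stdGaussianPi (Pi.single a 1 + Pi.single b 1
    + (Pi.single c 1 + Pi.single d 1))).congr (ae_of_all _ fun w => ?_)
  simp only [evalMonomial_add, evalMonomial_single]

variable [DecidableEq ι]

theorem integral_mul_evalMonomial_stdGaussianPi (a : ι) (e : ι → ℕ) :
    ∫ w, w a * evalMonomial e w ∂stdGaussianPi ι
      = e a * ∫ w, evalMonomial (e - Pi.single a 1) w ∂stdGaussianPi ι := by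
  have hmonomial (w : ι → ℝ) : w a * evalMonomial e w = evalMonomial (Pi.single a 1 + e) w := by
    rw [evalMonomial_add, evalMonomial_single]
  have hsplit (e' : ι → ℕ) : ∫ w, evalMonomial e' w ∂stdGaussianPi ι
      = (∫ x, x ^ e' a ∂gaussianReal 0 1) * ∏ i ∈ {a}ᶜ, ∫ x, x ^ e' i ∂gaussianReal 0 1 := by
    rw [integral_evalMonomial_stdGaussianPi, Fintype.prod_eq_mul_prod_compl a]
  simp only [hmonomial]
  rw [hsplit, hsplit, ← mul_assoc]
  congr 1
  · simp [add_comm 1, integral_pow_succ_gaussianReal]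
  · refine Finset.prod_congr rfl fun i hi => ?_
    have hia : i ≠ a := by simpa using hi
    simp [hia]

lemma integral_mul_stdGaussianPi (a b : ι) :
    ∫ w, w a * w b ∂stdGaussianPi ι = (1 : Matrix ι ι ℝ) a b := by
  have hwick := integral_mul_evalMonomial_stdGaussianPi a (Pi.single b 1)
  simp only [evalMonomial_single] at hwick
  rw [hwick]
  obtain rfl | hab := eq_or_ne a b
  · simp [evalMonomial]
  · simp [hab]

theorem integral_mul_mul_mul_stdGaussianPi (a b c d : ι) :
    ∫ w, w a * w b * (w c * w d) ∂stdGaussianPi ι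
      = (1 : Matrix ι ι ℝ) a b * (1 : Matrix ι ι ℝ) c d
        + (1 : Matrix ι ι ℝ) a c * (1 : Matrix ι ι ℝ) b d
        + (1 : Matrix ι ι ℝ) a d * (1 : Matrix ι ι ℝ) b c := by
  set e : ι → ℕ := Pi.single b 1 + Pi.single c 1 + Pi.single d 1 with he
  have hcontract {s p q : ι} (hs : e = Pi.single s 1 + (Pi.single p 1 + Pi.single q 1)) :
      (Pi.single s 1 : ι → ℕ) a * ∫ w, evalMonomial (e - Pi.single a 1) w ∂stdGaussianPi ι
        = (1 : Matrix ι ι ℝ) a s * (1 : Matrix ι ι ℝ) p q := by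
    obtain rfl | has := eq_or_ne a s
    · simp only [hs, add_tsub_cancel_left, evalMonomial_add, evalMonomial_single,
        integral_mul_stdGaussianPi, Pi.single_eq_same, Nat.cast_one, Matrix.one_apply_eq]
    · simp [has]
  calc ∫ w, w a * w b * (w c * w d) ∂stdGaussianPi ι
      = ∫ w, w a * evalMonomial e w ∂stdGaussianPi ι := by
        simp only [he, evalMonomial_add, evalMonomial_single, mul_assoc]
    _ = e a * ∫ w, evalMonomial (e - Pi.single a 1) w ∂stdGaussianPi ι :=
        integral_mul_evalMonomial_stdGaussianPi a e
    _ = _ := by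
        rw [← hcontract (s := b) (p := c) (q := d) (by rw [he]; abel),
          ← hcontract (s := c) (p := b) (q := d) (by rw [he]; abel),
          ← hcontract (s := d) (p := b) (q := c) (by rw [he]; abel), ← add_mul, ← add_mul]
        simp [he]

end GaussianMoments

section QuadraticForm

open ProbabilityTheory Matrix
open scoped Kronecker

variable {ι : Type*} [Fintype ι]

lemma dotProduct_mulVec_self_mul_dotProduct_mulVec_self {R : Type*} [CommSemiring R]
    (A B : Matrix ι ι R) (w : ι → R) :
    (w ⬝ᵥ A *ᵥ w) * (w ⬝ᵥ B *ᵥ w)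
      = ∑ a, ∑ b, ∑ c, ∑ d, A a b * B c d * (w a * w b * (w c * w d)) := by
  have hquad (C : Matrix ι ι R) : w ⬝ᵥ C *ᵥ w = ∑ a, ∑ b, C a b * (w a * w b) := by
    simp only [dotProduct, mulVec, Finset.mul_sum]
    exact Finset.sum_congr rfl fun a _ => Finset.sum_congr rfl fun b _ => by ring
  simp only [hquad, Finset.sum_mul]
  simp only [Finset.mul_sum]
  exact Finset.sum_congr rfl fun a _ => Finset.sum_congr rfl fun b _ =>
    Finset.sum_congr rfl fun c _ => Finset.sum_congr rfl fun d _ => by ring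

theorem integral_quadraticForm_mul_quadraticForm_stdGaussianPi (A B : Matrix ι ι ℝ) :
    ∫ w, (w ⬝ᵥ A *ᵥ w) * (w ⬝ᵥ B *ᵥ w) ∂stdGaussianPi ι
      = A.trace * B.trace + (A * Bᵀ).trace + (A * B).trace := by
  classical
  have hintegrable (a b c d : ι) : Integrable (fun w => A a b * B c d * (w a * w b * (w c * w d)))
      (stdGaussianPi ι) :=
    (integrable_mul_mul_mul_stdGaussianPi a b c d).const_mul (A a b * B c d)
  simp only [dotProduct_mulVec_self_mul_dotProduct_mulVec_self]
  simp (disch := fun_prop) only [integral_finsetSum, integral_const_mul,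
    integral_mul_mul_mul_stdGaussianPi, mul_add, Finset.sum_add_distrib]
  simp [trace, mul_apply, one_apply, Finset.sum_mul_sum]

variable {X : Type*} [MeasurableSpace X] {μ : Measure X}

lemma integrable_prod_quadraticForm_mul_quadraticForm [SFinite μ] {A B : X → Matrix ι ι ℝ}
    (hAB : ∀ a b c d, Integrable (fun x => A x a b * B x c d) μ) :
    Integrable (fun z : X × (ι → ℝ) => (z.2 ⬝ᵥ A z.1 *ᵥ z.2) * (z.2 ⬝ᵥ B z.1 *ᵥ z.2))
      (μ.prod (stdGaussianPi ι)) := by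
  simp only [dotProduct_mulVec_self_mul_dotProduct_mulVec_self]
  exact integrable_finsetSum _ fun a _ => integrable_finsetSum _ fun b _ =>
    integrable_finsetSum _ fun c _ => integrable_finsetSum _ fun d _ =>
      (hAB a b c d).mul_prod (integrable_mul_mul_mul_stdGaussianPi a b c d)

theorem integral_prod_quadraticForm_mul_quadraticForm [SFinite μ] {A B : X → Matrix ι ι ℝ}
    (hB : ∀ x, (B x).IsSymm) (hAB : ∀ a b c d, Integrable (fun x => A x a b * B x c d) μ) :
    ∫ z : X × (ι → ℝ), (z.2 ⬝ᵥ A z.1 *ᵥ z.2) * (z.2 ⬝ᵥ B z.1 *ᵥ z.2) ∂μ.prod (stdGaussianPi ι)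
      = (∑ a, ∑ b, ∫ x, A x a a * B x b b ∂μ) + 2 * ∑ a, ∑ b, ∫ x, A x a b * B x a b ∂μ := by
  have htrace (x : X) : (A x).trace * (B x).trace + (A x * (B x)ᵀ).trace + (A x * B x).trace
      = (∑ a, ∑ b, A x a a * B x b b) + 2 * ∑ a, ∑ b, A x a b * B x a b := by
    have hcomm : (A x * B x).trace = (A x * (B x)ᵀ).trace := by rw [(hB x).eq]
    rw [hcomm, add_assoc, ← two_mul]
    simp only [trace, diag_apply, mul_apply, transpose_apply, Finset.sum_mul_sum]
  rw [integral_prod _ (integrable_prod_quadraticForm_mul_quadraticForm hAB)]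
  simp only [integral_quadraticForm_mul_quadraticForm_stdGaussianPi, htrace]
  simp (disch := fun_prop) only [integral_add, integral_const_mul, integral_finsetSum]

variable {κ : Type*} [Fintype κ]

lemma measurePreserving_curry_stdGaussianPi :
    MeasurePreserving (MeasurableEquiv.curry κ ι ℝ) (stdGaussianPi (κ × ι))
      (Measure.pi fun _ : κ => stdGaussianPi ι) where
  measurable := (MeasurableEquiv.curry κ ι ℝ).measurable
  map_eq := by
    simpa only [Measure.infinitePi_eq_pi] using
      Measure.infinitePi_map_curry fun (_ : κ) (_ : ι) => gaussianReal 0 1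

lemma dotProduct_one_kronecker_mulVec_self [DecidableEq κ] {R : Type*} [CommSemiring R]
    (A : Matrix ι ι R) (w : κ × ι → R) :
    w ⬝ᵥ ((1 : Matrix κ κ R) ⊗ₖ A) *ᵥ w
      = ∑ k, Function.curry w k ⬝ᵥ A *ᵥ Function.curry w k := by
  simp [dotProduct, mulVec, Fintype.sum_prod_type, one_apply, Function.curry]

theorem integral_prod_sum_quadraticForm_mul_sum_quadraticForm [SFinite μ]
    {A B : X → Matrix ι ι ℝ} (hB : ∀ x, (B x).IsSymm)
    (hAB : ∀ i j p q, Integrable (fun x => A x i j * B x p q) μ) :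
    ∫ z : X × (κ → ι → ℝ), (∑ k, z.2 k ⬝ᵥ A z.1 *ᵥ z.2 k) * (∑ k, z.2 k ⬝ᵥ B z.1 *ᵥ z.2 k)
        ∂μ.prod (Measure.pi fun _ : κ => stdGaussianPi ι)
      = Fintype.card κ ^ 2 * (∑ i, ∑ j, ∫ x, A x i i * B x j j ∂μ)
          + 2 * Fintype.card κ * ∑ i, ∑ j, ∫ x, A x i j * B x i j ∂μ := by
  classical
  have hcurry : MeasurePreserving
      ((MeasurableEquiv.refl X).prodCongr (MeasurableEquiv.curry κ ι ℝ))
      (μ.prod (stdGaussianPi (κ × ι))) (μ.prod (Measure.pi fun _ : κ => stdGaussianPi ι)) :=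
    (MeasurePreserving.id μ).prod measurePreserving_curry_stdGaussianPi
  have hsymm (x : X) : ((1 : Matrix κ κ ℝ) ⊗ₖ B x).IsSymm := by
    rw [IsSymm, ← kroneckerMap_transpose, transpose_one, (hB x).eq]
  have hintegrable (s t s' t' : κ × ι) : Integrable (fun x => ((1 : Matrix κ κ ℝ) ⊗ₖ A x) s t
      * ((1 : Matrix κ κ ℝ) ⊗ₖ B x) s' t') μ := by
    simp only [kroneckerMap_apply, mul_mul_mul_comm _ (A _ _ _)]
    exact (hAB _ _ _ _).const_mul _
  -- The vectors `z.2 k` form one Gaussian vector on `κ × ι`, and the sum of their quadratic forms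
  -- is the quadratic form of the block-diagonal matrix `1 ⊗ A`.
  calc _ = ∫ z : X × (κ × ι → ℝ), (z.2 ⬝ᵥ ((1 : Matrix κ κ ℝ) ⊗ₖ A z.1) *ᵥ z.2)
        * (z.2 ⬝ᵥ ((1 : Matrix κ κ ℝ) ⊗ₖ B z.1) *ᵥ z.2) ∂μ.prod (stdGaussianPi (κ × ι)) := by
        rw [← hcurry.integral_comp']
        simp only [dotProduct_one_kronecker_mulVec_self]
        rfl
    _ = _ := by
        rw [integral_prod_quadraticForm_mul_quadraticForm hsymm hintegrable]
        simp only [kroneckerMap_apply, mul_mul_mul_comm _ (A _ _ _), integral_const_mul,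
          Fintype.sum_prod_type]
        simp only [one_apply, ↓reduceIte, mul_one, one_mul, mul_zero, zero_mul, mul_ite, ite_mul,
          ← Finset.mul_sum, Finset.sum_const, Finset.card_univ, nsmul_eq_mul, Finset.sum_ite_irrel,
          Finset.sum_ite_eq, Finset.mem_univ]
        ring

end QuadraticForm
lemma sum_sum_eq_sum_diag_add_sum_ite_ne {ι R : Type*} [Fintype ι] [DecidableEq ι]
    [AddCommMonoid R] (f : ι → ι → R) :
    ∑ i, ∑ j, f i j = ∑ i, f i i + ∑ i, ∑ j, if i ≠ j then f i j else 0 := by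
  rw [← Finset.sum_add_distrib]
  refine Finset.sum_congr rfl fun i _ => ?_
  have hdiag : f i i = ∑ j, if i = j then f i j else 0 := by simp
  rw [hdiag, ← Finset.sum_add_distrib]
  exact Finset.sum_congr rfl fun j _ => by by_cases hij : i = j <;> simp [hij]

section Calculus

lemma contDiff_fderiv_apply_param {E F G : Type*} [NormedAddCommGroup E] [NormedSpace ℝ E]
    [NormedAddCommGroup F] [NormedSpace ℝ F] [NormedAddCommGroup G] [NormedSpace ℝ G]
    {m n : WithTop ℕ∞} {l : E → F → G} (hl : ContDiff ℝ n (fun p : E × F => l p.1 p.2))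
    (hmn : m + 1 ≤ n) (e : F) : ContDiff ℝ m (fun p : E × F => fderiv ℝ (l p.1) p.2 e) :=
  ContDiff.fderiv_apply (f := fun p : E × F => l p.1)
    (hl.comp ((contDiff_fst.comp contDiff_fst).prodMk contDiff_snd)) contDiff_snd contDiff_const
    hmn

variable {H : Type*} [NormedAddCommGroup H] [InnerProductSpace ℝ H] [CompleteSpace H]
  {f g : H → ℝ} {f' g' x : H}

lemma hasGradientAt_add (hf : HasGradientAt f f' x) (hg : HasGradientAt g g' x) :
    HasGradientAt (fun y => f y + g y) (f' + g') x := by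
  rw [hasGradientAt_iff_hasFDerivAt, map_add]
  exact hf.hasFDerivAt.add hg.hasFDerivAt

lemma hasGradientAt_const_mul (c : ℝ) (hf : HasGradientAt f f' x) :
    HasGradientAt (fun y => c * f y) (c • f') x := by
  rw [hasGradientAt_iff_hasFDerivAt, map_smul]
  exact hf.hasFDerivAt.const_mul c

lemma hasGradientAt_sum {ι : Type*} {s : Finset ι} {f : ι → H → ℝ} {f' : ι → H}
    (hf : ∀ i ∈ s, HasGradientAt (f i) (f' i) x) :
    HasGradientAt (fun y => ∑ i ∈ s, f i y) (∑ i ∈ s, f' i) x := by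
  rw [hasGradientAt_iff_hasFDerivAt, map_sum]
  exact HasFDerivAt.fun_sum fun i hi => (hf i hi).hasFDerivAt

end Calculus

section SlicedGradient

open Matrix

variable {D K M : ℕ} {pm : EuclideanSpace ℝ (Fin K) → (Fin D → ℝ) → ℝ}

lemma contDiff_dLx {m n : WithTop ℕ∞}
    (hl : ContDiff ℝ n fun p : EuclideanSpace ℝ (Fin K) × (Fin D → ℝ) => Real.log (pm p.1 p.2))
    (hmn : m + 1 ≤ n) (i : Fin D) :
    ContDiff ℝ m fun p : EuclideanSpace ℝ (Fin K) × (Fin D → ℝ) => dLx pm p.1 p.2 i :=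
  contDiff_fderiv_apply_param (l := fun θ y => Real.log (pm θ y)) hl hmn (Pi.single i 1)

lemma contDiff_d2Lx {m n : WithTop ℕ∞}
    (hl : ContDiff ℝ n fun p : EuclideanSpace ℝ (Fin K) × (Fin D → ℝ) => Real.log (pm p.1 p.2))
    (hmn : m + 1 + 1 ≤ n) (i j : Fin D) :
    ContDiff ℝ m fun p : EuclideanSpace ℝ (Fin K) × (Fin D → ℝ) => d2Lx pm p.1 p.2 i j :=
  contDiff_fderiv_apply_param (l := fun θ y => dLx pm θ y j) (contDiff_dLx hl hmn j) le_rfl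
    (Pi.single i 1)

lemma d2Lx_comm {θ : EuclideanSpace ℝ (Fin K)} {x : Fin D → ℝ}
    (hl : ContDiffAt ℝ 2 (fun y => Real.log (pm θ y)) x) (i j : Fin D) :
    d2Lx pm θ x i j = d2Lx pm θ x j i := by
  have hdiff : DifferentiableAt ℝ (fderiv ℝ fun y => Real.log (pm θ y)) x :=
    (hl.fderiv_right (m := 1) le_rfl).differentiableAt one_ne_zero
  have hsndFDeriv (i j : Fin D) : d2Lx pm θ x i j
      = fderiv ℝ (fderiv ℝ fun y => Real.log (pm θ y)) x (Pi.single i 1) (Pi.single j 1) := by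
    simp only [d2Lx, dLx]
    rw [fderiv_clm_apply hdiff (differentiableAt_const _)]
    simp
  rw [hsndFDeriv, hsndFDeriv]
  exact (hl.isSymmSndFDerivAt (by simp)).eq _ _

lemma uVec_comm {x : Fin D → ℝ} (hl : ∀ θ, ContDiffAt ℝ 2 (fun y => Real.log (pm θ y)) x)
    (θstar : EuclideanSpace ℝ (Fin K)) (i j : Fin D) :
    uVec pm θstar i j x = uVec pm θstar j i x := by
  simp only [uVec, d2Lx_comm (hl _) i j, mul_comm (dLx pm _ x i)]

/-- The `D × D` matrix `(u_{ij}(x))_a` of the `a`-th coordinates of the vectors `uVec`. The `a`-th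
coordinate of the sliced gradient is the average over the slices of its quadratic form. -/
def uMatrix (pm : EuclideanSpace ℝ (Fin K) → (Fin D → ℝ) → ℝ) (θstar : EuclideanSpace ℝ (Fin K))
    (a : Fin K) (x : Fin D → ℝ) : Matrix (Fin D) (Fin D) ℝ :=
  Matrix.of fun i j => uVec pm θstar i j x a

lemma isSymm_uMatrix {x : Fin D → ℝ} (hl : ∀ θ, ContDiffAt ℝ 2 (fun y => Real.log (pm θ y)) x)
    (θstar : EuclideanSpace ℝ (Fin K)) (a : Fin K) : (uMatrix pm θstar a x).IsSymm :=
  IsSymm.ext fun i j => by simp only [uMatrix, of_apply, uVec_comm hl θstar i j]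

lemma avgF_eq_sum (θ : EuclideanSpace ℝ (Fin K)) (x : Fin D → ℝ) (vs : Fin M → Fin D → ℝ) :
    avgF pm θ x vs = (1 / (M : ℝ)) * ∑ k, ∑ i, ∑ j, vs k i * vs k j
      * (d2Lx pm θ x i j + (1 / 2) * (dLx pm θ x i * dLx pm θ x j)) := by
  have hsquare (k : Fin M) : (∑ i, vs k i * dLx pm θ x i) ^ 2
      = ∑ i, ∑ j, vs k i * dLx pm θ x i * (vs k j * dLx pm θ x j) := by
    rw [sq, Finset.sum_mul_sum]
  simp only [avgF, hsquare]
  simp only [Finset.mul_sum, ← Finset.sum_add_distrib]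
  exact Finset.sum_congr rfl fun k _ => Finset.sum_congr rfl fun i _ =>
    Finset.sum_congr rfl fun j _ => by ring

lemma hasGradientAt_uVec {θ : EuclideanSpace ℝ (Fin K)} {x : Fin D → ℝ} {i j : Fin D}
    (hij : DifferentiableAt ℝ (fun θ => d2Lx pm θ x i j) θ)
    (hi : DifferentiableAt ℝ (fun θ => dLx pm θ x i) θ)
    (hj : DifferentiableAt ℝ (fun θ => dLx pm θ x j) θ) :
    HasGradientAt (fun θ => d2Lx pm θ x i j + (1 / 2) * (dLx pm θ x i * dLx pm θ x j))
      (uVec pm θ i j x) θ :=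
  hasGradientAt_add hij.hasGradientAt (hasGradientAt_const_mul _ (hi.mul hj).hasGradientAt)

lemma gradF_eq_sum
    (hl : ContDiff ℝ 3 fun p : EuclideanSpace ℝ (Fin K) × (Fin D → ℝ) => Real.log (pm p.1 p.2))
    (θ : EuclideanSpace ℝ (Fin K)) (x : Fin D → ℝ) (vs : Fin M → Fin D → ℝ) :
    gradF pm θ x vs
      = (1 / (M : ℝ)) • ∑ k, ∑ i, ∑ j, (vs k i * vs k j) • uVec pm θ i j x := by
  have hslice : ContDiff ℝ 1 fun θ : EuclideanSpace ℝ (Fin K) => (θ, x) :=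
    contDiff_id.prodMk contDiff_const
  have hdLx (i : Fin D) : DifferentiableAt ℝ (fun θ => dLx pm θ x i) θ :=
    ((contDiff_dLx hl (by norm_num) i).comp hslice).differentiable one_ne_zero θ
  have hd2Lx (i j : Fin D) : DifferentiableAt ℝ (fun θ => d2Lx pm θ x i j) θ :=
    ((contDiff_d2Lx hl (by norm_num) i j).comp hslice).differentiable one_ne_zero θ
  simp only [gradF, avgF_eq_sum]
  exact (hasGradientAt_const_mul _ <| hasGradientAt_sum fun k _ => hasGradientAt_sum fun i _ =>
    hasGradientAt_sum fun j _ => hasGradientAt_const_mul _ <|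
      hasGradientAt_uVec (hd2Lx i j) (hdLx i) (hdLx j)).gradient

lemma gradF_apply
    (hl : ContDiff ℝ 3 fun p : EuclideanSpace ℝ (Fin K) × (Fin D → ℝ) => Real.log (pm p.1 p.2))
    (θ : EuclideanSpace ℝ (Fin K)) (x : Fin D → ℝ) (vs : Fin M → Fin D → ℝ) (a : Fin K) :
    gradF pm θ x vs a = (1 / (M : ℝ)) * ∑ k, vs k ⬝ᵥ uMatrix pm θ a x *ᵥ vs k := by
  simp [gradF_eq_sum hl, uMatrix, dotProduct, mulVec, Finset.mul_sum, mul_assoc, mul_comm]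

theorem variance_of_sliced_gradient_gaussian_general {θstar : EuclideanSpace ℝ (Fin K)}
    {μd : Measure (Fin D → ℝ)} [SFinite μd] (hM : 1 ≤ M)
    (hl : ContDiff ℝ 3 fun p : EuclideanSpace ℝ (Fin K) × (Fin D → ℝ) => Real.log (pm p.1 p.2))
    {a b : Fin K}
    (huu_int : ∀ i j p q, Integrable (fun x => uVec pm θstar i j x a * uVec pm θstar p q x b) μd) :
    ∫ z : (Fin D → ℝ) × (Fin M → Fin D → ℝ),
        gradF pm θstar z.1 z.2 a * gradF pm θstar z.1 z.2 b
        ∂(μd.prod (Measure.pi fun _ : Fin M => stdGaussianPi (Fin D)))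
      = (∑ i, ∑ j, ∫ x, uVec pm θstar i i x a * uVec pm θstar j j x b ∂μd)
        + (2 / (M : ℝ)) * (∑ i, ∫ x, uVec pm θstar i i x a * uVec pm θstar i i x b ∂μd)
        + (2 / (M : ℝ)) * (∑ i, ∑ j, if i ≠ j then
            ∫ x, uVec pm θstar i j x a * uVec pm θstar i j x b ∂μd else 0) := by
  have hM' : (M : ℝ) ≠ 0 := by positivity
  have hlx (x : Fin D → ℝ) (θ : EuclideanSpace ℝ (Fin K)) :
      ContDiffAt ℝ 2 (fun y => Real.log (pm θ y)) x :=
    ((hl.of_le (by norm_num)).comp (contDiff_const.prodMk contDiff_id)).contDiffAt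
  have hsymm (x : Fin D → ℝ) : (uMatrix pm θstar b x).IsSymm := isSymm_uMatrix (hlx x) θstar b
  simp only [gradF_apply hl, mul_mul_mul_comm (1 / (M : ℝ)), integral_const_mul]
  rw [integral_prod_sum_quadraticForm_mul_sum_quadraticForm (A := uMatrix pm θstar a) hsymm huu_int,
    add_assoc, ← mul_add,
    ← sum_sum_eq_sum_diag_add_sum_ite_ne
      fun i j => ∫ x, uVec pm θstar i j x a * uVec pm θstar i j x b ∂μd]
  simp only [uMatrix, of_apply, Fintype.card_fin]
  field

end SlicedGradient

/-- **Lemma B.6 of the paper (Gaussian case).** If `p_v = N(0, I_D)`, the covariance of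
`∇_θ f(θ*; x, v_1^M)` equals `Σ_{ij} V_{ij} + (2/M) Σ_i V_{ii} + (2/M) Σ_{i≠j} W_{ij}`. -/
theorem variance_of_sliced_gradient_gaussian
    (D K M : ℕ) (hD : 1 ≤ D) (hM : 1 ≤ M)
    (pd : (Fin D → ℝ) → ℝ)
    (pm : EuclideanSpace ℝ (Fin K) → (Fin D → ℝ) → ℝ)
    (θstar : EuclideanSpace ℝ (Fin K))
    (μd μv : Measure (Fin D → ℝ)) [IsProbabilityMeasure μd] [IsProbabilityMeasure μv]
    -- data density: positive, differentiable; μd is the data distribution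
    (hpd_pos : ∀ x, 0 < pd x) (hpd_diff : Differentiable ℝ pd)
    (hμd : μd = volume.withDensity (fun x => ENNReal.ofReal (pd x)))
    -- p_v is the multivariate standard normal N(0, I_D)
    (hμv : μv = Measure.pi fun _ : Fin D => ProbabilityTheory.gaussianReal 0 1)
    -- model densities: positive, with all relevant derivatives existing
    (hpm_pos : ∀ θ x, 0 < pm θ x)
    (hsmooth : ContDiff ℝ (⊤ : ℕ∞)
      (fun p : EuclideanSpace ℝ (Fin K) × (Fin D → ℝ) => Real.log (pm p.1 p.2)))
    -- well-specified: p_d = p_m(·; θ*)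
    (hws : pd = pm θstar)
    -- all expectations below are finite
    (hg_int : ∀ a : Fin K,
      Integrable (fun z : (Fin D → ℝ) × (Fin M → Fin D → ℝ) => gradF pm θstar z.1 z.2 a)
        (μd.prod (Measure.pi fun _ : Fin M => μv)))
    (hgg_int : ∀ a b : Fin K,
      Integrable (fun z : (Fin D → ℝ) × (Fin M → Fin D → ℝ) =>
          gradF pm θstar z.1 z.2 a * gradF pm θstar z.1 z.2 b)
        (μd.prod (Measure.pi fun _ : Fin M => μv)))
    (huu_int : ∀ (i j p q : Fin D) (a b : Fin K),
      Integrable (fun x => uVec pm θstar i j x a * uVec pm θstar p q x b) μd)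
    -- the assumptions of Theorem 1 hold, so the gradient has zero mean at θ*
    (hmean : ∀ a : Fin K,
      ∫ z : (Fin D → ℝ) × (Fin M → Fin D → ℝ), gradF pm θstar z.1 z.2 a
        ∂(μd.prod (Measure.pi fun _ : Fin M => μv)) = 0) :
    ∀ a b : Fin K,
      (∫ z : (Fin D → ℝ) × (Fin M → Fin D → ℝ),
          gradF pm θstar z.1 z.2 a * gradF pm θstar z.1 z.2 b
          ∂(μd.prod (Measure.pi fun _ : Fin M => μv)))
        - (∫ z : (Fin D → ℝ) × (Fin M → Fin D → ℝ), gradF pm θstar z.1 z.2 a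
            ∂(μd.prod (Measure.pi fun _ : Fin M => μv)))
          * (∫ z : (Fin D → ℝ) × (Fin M → Fin D → ℝ), gradF pm θstar z.1 z.2 b
              ∂(μd.prod (Measure.pi fun _ : Fin M => μv)))
      = (∑ i, ∑ j, ∫ x, uVec pm θstar i i x a * uVec pm θstar j j x b ∂μd)
        + (2 / (M : ℝ)) * (∑ i, ∫ x, uVec pm θstar i i x a * uVec pm θstar i i x b ∂μd)
        + (2 / (M : ℝ)) * (∑ i, ∑ j, if i ≠ j then
            ∫ x, uVec pm θstar i j x a * uVec pm θstar i j x b ∂μd else 0) := by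
  intro a b
  subst hμv
  rw [hmean a, zero_mul, sub_zero]
  exact variance_of_sliced_gradient_gaussian_general hM (contDiff_infty.mp hsmooth 3)
    fun i j p q => huu_int i j p q a b
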